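/- (Schmidt decomposition / singular value expansion) Let H₁, H₂ be separable real Hilbert spaces and u ∈ H₁ ⊗ H₂ (Hilbert tensor product). Then there exist a nonincreasing, square-summable sequence of nonnegative reals (σ_i), an orthonormal family (ψ_i) in H₁, and an orthonormal family (φ_i) in H₂ such that u = Σ_{i=1}^∞ σ_i ψ_i ⊗ φ_i, with convergence in the norm of H₁ ⊗ H₂ and ‖u‖² = Σ_i σ_i². -/

import Mathlib

open scoped InnerProductSpace

/-!
A Hilbert–Schmidt operator `u` is compact, so the spectral theorem for `u† ∘ u` gives a Hilbert
basis `b` whose images `u (b j)` are pairwise orthogonal. The Hilbert–Schmidt norm does not depend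
on the basis, so `∑ ‖u (b j)‖² = ‖u‖²`; in particular only finitely many `‖u (b j)‖` exceed a given
`ε > 0`, and the nonzero ones can be listed in decreasing order. These are the `σ i`, with `φ i` the
corresponding `b j`, and with `ψ i` the unit vector in the direction of `u (b j)`.
-/

open Filter Function InnerProductSpace Topology

section DecreasingRearrangement

variable {ι κ α : Type*}

open scoped Classical in
/-- The sequence of repeated choices made by `c`, where each `c s` stands for a choice outside the
finite set `s` of earlier choices; it serves to list a family of values in decreasing order. -/
noncomputable def greedySeq (c : Finset ι → ι) : ℕ → ι
  | n => c (Finset.univ.image fun m : Fin n => greedySeq c m)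

theorem greedySeq_injective {c : Finset ι → ι} (hc : ∀ s, c s ∉ s) : Injective (greedySeq c) := by
  classical
  intro m n heq
  by_contra hne
  wlog hmn : m < n generalizing m n
  · exact this heq.symm (Ne.symm hne) (by lia)
  have hmem : greedySeq c n ∈ Finset.univ.image fun l : Fin n => greedySeq c l :=
    Finset.mem_image.mpr ⟨⟨m, hmn⟩, Finset.mem_univ _, heq⟩
  rw [greedySeq] at hmem
  exact hc _ hmem

theorem le_apply_greedySeq [LE α] {f : ι → α} {c : Finset ι → ι}
    (hmax : ∀ s, ∀ j ∉ s, f j ≤ f (c s)) {j : ι} {n : ℕ} (hj : ∀ m < n, greedySeq c m ≠ j) :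
    f j ≤ f (greedySeq c n) := by
  classical
  rw [greedySeq]
  refine hmax _ j fun hmem => ?_
  obtain ⟨m, -, hm⟩ := Finset.mem_image.mp hmem
  exact hj m m.2 hm

theorem exists_support_comp_equiv [Zero α] {f : κ → α} {k : ι → κ} (hk : Injective k)
    (hf : support f ⊆ Set.range k) :
    ∃ τ : support (f ∘ k) ≃ support f, ∀ i, (τ i : κ) = k i :=
  ⟨Set.BijOn.equiv k ⟨fun _ hi => hi, hk.injOn, fun j hj => by
    obtain ⟨i, rfl⟩ := hf hj
    exact ⟨i, hj, rfl⟩⟩, fun _ => rfl⟩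

theorem hasSum_iff_of_equiv_of_support_subset [AddCommMonoid α] [TopologicalSpace α]
    {f : ι → α} {g : κ → α} {s : Set ι} {t : Set κ} (τ : s ≃ t) (hf : support f ⊆ s)
    (hg : support g ⊆ t) (hfg : ∀ i : s, f i = g (τ i)) {a : α} : HasSum f a ↔ HasSum g a := by
  rw [← hasSum_subtype_iff_of_support_subset hf, ← hasSum_subtype_iff_of_support_subset hg,
    ← τ.hasSum_iff]
  exact iff_of_eq (congrArg (HasSum · a) (funext hfg))

variable [LinearOrder α] [Zero α] [TopologicalSpace α] [OrderClosedTopology α]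

theorem exists_notMem_forall_notMem_le [Infinite ι] {f : ι → α} (hf₀ : 0 ≤ f)
    (hf : Tendsto f cofinite (𝓝 0)) (s : Finset ι) : ∃ i ∉ s, ∀ j ∉ s, f j ≤ f i := by
  by_cases! hpos : ∃ j ∉ s, 0 < f j
  · obtain ⟨j, hjs, hj⟩ := hpos
    have hfin : {i | f j ≤ f i}.Finite := by
      simpa [eventually_cofinite] using hf.eventually_lt_const hj
    obtain ⟨i, ⟨his, hji⟩, hi⟩ :=
      (hfin.subset Set.inter_subset_right).exists_maximalFor f {i | i ∉ s ∧ f j ≤ f i}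
        ⟨j, hjs, le_rfl⟩
    refine ⟨i, his, fun l hl => (le_total (f l) (f i)).elim id fun hil => ?_⟩
    exact hi ⟨hl, hji.trans hil⟩ hil
  · obtain ⟨i, hi⟩ := Infinite.exists_notMem_finset s
    exact ⟨i, hi, fun j hj => (hpos j hj).trans (hf₀ i)⟩

theorem exists_injective_antitone_comp [Infinite ι] {f : ι → α} (hf₀ : 0 ≤ f)
    (hf : Tendsto f cofinite (𝓝 0)) :
    ∃ k : ℕ → ι, Injective k ∧ Antitone (f ∘ k) ∧ support f ⊆ Set.range k := by
  choose c hc hmax using exists_notMem_forall_notMem_le hf₀ hf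
  have hinj := greedySeq_injective hc
  refine ⟨greedySeq c, hinj, fun m n hmn => ?_, fun j hj => ?_⟩
  · exact le_apply_greedySeq hmax fun l hl => hinj.ne (hl.trans_le hmn).ne
  · by_contra! hjk
    have hlim : Tendsto (f ∘ greedySeq c) atTop (𝓝 0) :=
      Nat.cofinite_eq_atTop ▸ hf.comp hinj.tendsto_cofinite
    refine hj (le_antisymm (ge_of_tendsto' hlim fun n => ?_) (hf₀ j))
    exact le_apply_greedySeq hmax fun m _ hm => hjk ⟨m, hm⟩

theorem exists_antitone_equiv_support {f : ι → α} (hf₀ : 0 ≤ f)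
    (hf : Tendsto f cofinite (𝓝 0)) :
    ∃ (σ : ℕ → α) (τ : support σ ≃ support f), Antitone σ ∧ 0 ≤ σ ∧
      ∀ n, f (τ n) = σ n := by
  -- Padding `f` with zeros makes its index type infinite, so that a greedy enumeration never stops.
  let g : ι ⊕ ℕ → α := Sum.elim f 0
  have hg₀ : 0 ≤ g := by rintro (i | n); exacts [hf₀ i, le_rfl]
  have hg_range : support g ⊆ Set.range Sum.inl := by
    rintro (i | n) h; exacts [⟨i, rfl⟩, (h rfl).elim]
  have hg : Tendsto g cofinite (𝓝 0) := fun s hs => by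
    refine ((hf hs).image Sum.inl).subset ?_
    rintro (i | n) h
    exacts [⟨i, h, rfl⟩, (h (mem_of_mem_nhds hs : (0 : α) ∈ s)).elim]
  obtain ⟨k, hk, hanti, hk_range⟩ := exists_injective_antitone_comp hg₀ hg
  obtain ⟨τ, hτ⟩ := exists_support_comp_equiv hk hk_range
  obtain ⟨ρ, hρ⟩ := exists_support_comp_equiv Sum.inl_injective hg_range
  refine ⟨g ∘ k, τ.trans ρ.symm, hanti, fun n => hg₀ (k n), fun n => ?_⟩
  calc g (Sum.inl (ρ.symm (τ n))) = g (τ n) := by rw [← hρ, ρ.apply_symm_apply]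
    _ = g (k n) := by rw [hτ]

end DecreasingRearrangement

section HilbertBasis

variable {𝕜 E ι : Type*} [RCLike 𝕜] [NormedAddCommGroup E] [InnerProductSpace 𝕜 E]

theorem hasSum_norm_inner_sq (b : HilbertBasis ι 𝕜 E) (x : E) :
    HasSum (fun i => ‖⟪b i, x⟫_𝕜‖ ^ 2) (‖x‖ ^ 2) := by
  simpa [b.repr_apply_apply] using lp.hasSum_norm (p := 2) (by norm_num) (b.repr x)

theorem orthonormal_normalize {v : ι → E} (hv : Pairwise fun i j => ⟪v i, v j⟫_𝕜 = 0)
    (hv₀ : ∀ i, v i ≠ 0) : Orthonormal 𝕜 fun i => ((‖v i‖⁻¹ : ℝ) : 𝕜) • v i :=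
  ⟨fun i => by simp [norm_smul, hv₀ i], fun i j hij => by
    simp [inner_smul_left, inner_smul_right, hv hij]⟩

theorem exists_hilbertBasis_mem_of_orthogonalFamily [CompleteSpace E] {V : ι → Submodule 𝕜 E}
    [∀ i, CompleteSpace (V i)] (hV : OrthogonalFamily 𝕜 (fun i => V i) fun i => (V i).subtypeₗᵢ)
    (hV_top : (⨆ i, V i)ᗮ = ⊥) :
    ∃ (w : Set E) (b : HilbertBasis w 𝕜 E), ∀ x, ∃ i, b x ∈ V i := by
  choose w B _ using fun i => exists_hilbertBasis 𝕜 (V i)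
  let v : (Σ i, w i) → E := fun k => B k.1 k.2
  have hv : Orthonormal 𝕜 v := hV.orthonormal_sigma_orthonormal fun i => (B i).orthonormal
  have hV_le : ⨆ i, V i ≤ (Submodule.span 𝕜 (Set.range v)).topologicalClosure := by
    refine iSup_le fun i y hy => ?_
    have hsum : HasSum (fun k => (B i).repr ⟨y, hy⟩ k • v ⟨i, k⟩) y :=
      ((B i).hasSum_repr ⟨y, hy⟩).mapL (V i).subtypeL
    refine mem_closure_of_tendsto hsum (Eventually.of_forall fun s => ?_)
    exact Submodule.sum_smul_mem _ _ fun k _ => Submodule.subset_span ⟨⟨i, k⟩, rfl⟩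
  have hv_top : (Submodule.span 𝕜 (Set.range ((↑) : Set.range v → E)))ᗮ = ⊥ := by
    rw [Subtype.range_coe, ← Submodule.orthogonal_closure, ← le_bot_iff, ← hV_top]
    exact Submodule.orthogonal_le hV_le
  refine ⟨_, HilbertBasis.mkOfOrthogonalEqBot hv.toSubtypeRange hv_top, ?_⟩
  rw [HilbertBasis.coe_mkOfOrthogonalEqBot]
  rintro ⟨_, k, rfl⟩
  exact ⟨k.1, (B k.1 k.2).2⟩

theorem exists_hilbertBasis_eigenvectors [CompleteSpace E] {T : E →L[𝕜] E}
    (hT : IsCompactOperator T) (hT' : T.IsSymmetric) :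
    ∃ (w : Set E) (b : HilbertBasis w 𝕜 E), ∀ x, ∃ μ : 𝕜, T (b x) = μ • b x := by
  have (μ : 𝕜) : CompleteSpace (Module.End.eigenspace (T : Module.End 𝕜 E) μ) :=
    (T.isClosed_eigenspace μ).completeSpace_coe
  obtain ⟨w, b, hb⟩ := exists_hilbertBasis_mem_of_orthogonalFamily
    hT'.orthogonalFamily_eigenspaces
    (ContinuousLinearMap.orthogonalComplement_iSup_eigenspaces_eq_bot hT hT')
  exact ⟨w, b, fun x => (hb x).imp fun _ => Module.End.mem_eigenspace_iff.mp⟩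

end HilbertBasis

section HilbertSchmidt

variable {𝕜 H₁ H₂ ι κ : Type*} [RCLike 𝕜] [NormedAddCommGroup H₁] [InnerProductSpace 𝕜 H₁]
  [NormedAddCommGroup H₂] [InnerProductSpace 𝕜 H₂]

theorem hasSum_inner_smul_map (b : HilbertBasis ι 𝕜 H₂) (u : H₂ →L[𝕜] H₁) (g : H₂) :
    HasSum (fun i => ⟪b i, g⟫_𝕜 • u (b i)) (u g) := by
  simpa [b.repr_apply_apply] using (b.hasSum_repr g).mapL u

theorem opNorm_le_sqrt_tsum_norm_sq (e : HilbertBasis ι 𝕜 H₂) (u : H₂ →L[𝕜] H₁)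
    (hu : Summable fun i => ‖u (e i)‖ ^ 2) : ‖u‖ ≤ √(∑' i, ‖u (e i)‖ ^ 2) := by
  refine u.opNorm_le_bound (Real.sqrt_nonneg _) fun g => ?_
  refine le_of_tendsto' (hasSum_inner_smul_map e u g).norm fun s => ?_
  calc ‖∑ i ∈ s, ⟪e i, g⟫_𝕜 • u (e i)‖ ≤ ∑ i ∈ s, ‖u (e i)‖ * ‖⟪e i, g⟫_𝕜‖ :=
        norm_sum_le_of_le s fun i _ => by rw [norm_smul, mul_comm]
    _ ≤ √(∑ i ∈ s, ‖u (e i)‖ ^ 2) * √(∑ i ∈ s, ‖⟪e i, g⟫_𝕜‖ ^ 2) :=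
        Real.sum_mul_le_sqrt_mul_sqrt _ _ _
    _ ≤ √(∑' i, ‖u (e i)‖ ^ 2) * √(‖g‖ ^ 2) := by
        gcongr
        · exact hu.sum_le_tsum s fun i _ => sq_nonneg _
        · exact e.orthonormal.sum_inner_products_le g
    _ = √(∑' i, ‖u (e i)‖ ^ 2) * ‖g‖ := by rw [Real.sqrt_sq (norm_nonneg g)]

theorem norm_sub_sum_rankOne_le (e : HilbertBasis ι 𝕜 H₂) (u : H₂ →L[𝕜] H₁)
    (hu : Summable fun i => ‖u (e i)‖ ^ 2) (s : Finset ι) :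
    ‖u - ∑ i ∈ s, rankOne 𝕜 (u (e i)) (e i)‖ ≤ √(∑' i : {i // i ∉ s}, ‖u (e i)‖ ^ 2) := by
  classical
  have hcoord (j : ι) : ‖(u - ∑ i ∈ s, rankOne 𝕜 (u (e i)) (e i)) (e j)‖ ^ 2 =
      Set.indicator {i | i ∉ s} (fun i => ‖u (e i)‖ ^ 2) j := by
    by_cases hj : j ∈ s <;>
      simp [orthonormal_iff_ite.mp e.orthonormal, ite_smul, hj]
  refine (opNorm_le_sqrt_tsum_norm_sq e _ ?_).trans_eq ?_
  · simpa only [hcoord] using hu.indicator _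
  · simp_rw [hcoord]
    rw [← tsum_subtype]
    rfl

theorem hasSum_rankOne (e : HilbertBasis ι 𝕜 H₂) (u : H₂ →L[𝕜] H₁)
    (hu : Summable fun i => ‖u (e i)‖ ^ 2) :
    HasSum (fun i => rankOne 𝕜 (u (e i)) (e i)) u := by
  have htail : Tendsto (fun s : Finset ι => √(∑' i : {i // i ∉ s}, ‖u (e i)‖ ^ 2)) atTop (𝓝 0) := by
    simpa using (tendsto_tsum_compl_atTop_zero fun i => ‖u (e i)‖ ^ 2).sqrt
  refine tendsto_iff_norm_sub_tendsto_zero.mpr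
    (squeeze_zero (fun _ => norm_nonneg _) (fun s => ?_) htail)
  rw [norm_sub_rev]
  exact norm_sub_sum_rankOne_le e u hu s

theorem isCompactOperator_rankOne (x : H₁) (y : H₂) : IsCompactOperator (rankOne 𝕜 x y) :=
  (isCompactOperator_of_locallyCompactSpace_dom (innerSL 𝕜 y)).clm_comp
    (ContinuousLinearMap.toSpanSingleton 𝕜 x)

theorem isCompactOperator_of_summable_norm_sq [CompleteSpace H₁] (e : HilbertBasis ι 𝕜 H₂)
    (u : H₂ →L[𝕜] H₁) (hu : Summable fun i => ‖u (e i)‖ ^ 2) : IsCompactOperator u :=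
  isCompactOperator_of_tendsto (hasSum_rankOne e u hu) <| Eventually.of_forall fun _ =>
    (compactOperator (RingHom.id 𝕜) H₂ H₁).sum_mem fun _ _ => isCompactOperator_rankOne _ _

open ContinuousLinearMap in
theorem hasSum_norm_adjoint_sq [CompleteSpace H₁] [CompleteSpace H₂] (e : HilbertBasis ι 𝕜 H₂)
    (f : HilbertBasis κ 𝕜 H₁) {u : H₂ →L[𝕜] H₁} {a : ℝ}
    (hu : HasSum (fun i => ‖u (e i)‖ ^ 2) a) : HasSum (fun j => ‖adjoint u (f j)‖ ^ 2) a := by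
  have hrow (i : ι) := hasSum_norm_inner_sq f (u (e i))
  have hcol (j : κ) : HasSum (fun i => ‖⟪f j, u (e i)⟫_𝕜‖ ^ 2) (‖adjoint u (f j)‖ ^ 2) := by
    simpa [adjoint_inner_right, norm_inner_symm] using hasSum_norm_inner_sq e (adjoint u (f j))
  have hsummable : Summable fun p : ι × κ => ‖⟪f p.2, u (e p.1)⟫_𝕜‖ ^ 2 := by
    refine (summable_prod_of_nonneg fun p => sq_nonneg _).mpr ⟨fun i => (hrow i).summable, ?_⟩
    simpa only [(hrow _).tsum_eq] using hu.summable
  rw [hu.unique (hsummable.hasSum.prod_fiberwise hrow)]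
  exact ((Equiv.prodComm κ ι).hasSum_iff.mpr hsummable.hasSum).prod_fiberwise hcol

theorem hasSum_norm_sq_of_hilbertBasis [CompleteSpace H₁] [CompleteSpace H₂]
    (e : HilbertBasis ι 𝕜 H₂) (b : HilbertBasis κ 𝕜 H₂) {u : H₂ →L[𝕜] H₁} {a : ℝ}
    (hu : HasSum (fun i => ‖u (e i)‖ ^ 2) a) : HasSum (fun j => ‖u (b j)‖ ^ 2) a := by
  obtain ⟨_, f, -⟩ := exists_hilbertBasis 𝕜 H₁
  simpa using hasSum_norm_adjoint_sq f b (hasSum_norm_adjoint_sq e f hu)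

open ContinuousLinearMap in
theorem exists_hilbertBasis_pairwise_inner_map_eq_zero [CompleteSpace H₁] [CompleteSpace H₂]
    {u : H₂ →L[𝕜] H₁} (hu : IsCompactOperator u) :
    ∃ (w : Set H₂) (b : HilbertBasis w 𝕜 H₂), Pairwise fun i j => ⟪u (b i), u (b j)⟫_𝕜 = 0 := by
  have hsymm : (adjoint u ∘L u).IsSymmetric := fun x y => by
    simp [adjoint_inner_left, adjoint_inner_right]
  obtain ⟨w, b, hb⟩ := exists_hilbertBasis_eigenvectors (hu.clm_comp (adjoint u)) hsymm
  refine ⟨w, b, fun i j hij => ?_⟩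
  obtain ⟨μ, hμ⟩ := hb i
  calc ⟪u (b i), u (b j)⟫_𝕜 = ⟪(adjoint u ∘L u) (b i), b j⟫_𝕜 := by simp [adjoint_inner_left]
    _ = 0 := by rw [hμ, inner_smul_left, b.orthonormal.inner_eq_zero hij, mul_zero]

theorem exists_hilbertBasis_orthogonal_images [CompleteSpace H₂] (e : HilbertBasis ι 𝕜 H₂)
    (u : H₂ →L[𝕜] H₁) {a : ℝ} (hu : HasSum (fun i => ‖u (e i)‖ ^ 2) a) :
    ∃ (w : Set H₂) (b : HilbertBasis w 𝕜 H₂),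
      (Pairwise fun i j => ⟪u (b i), u (b j)⟫_𝕜 = 0) ∧ HasSum (fun j => ‖u (b j)‖ ^ 2) a := by
  -- The adjoint of `u` lives on the completion of `H₁`.
  let u' : H₂ →L[𝕜] UniformSpace.Completion H₁ := UniformSpace.Completion.toComplL ∘L u
  have hu' : HasSum (fun i => ‖u' (e i)‖ ^ 2) a := by simpa [u'] using hu
  obtain ⟨w, b, hb⟩ := exists_hilbertBasis_pairwise_inner_map_eq_zero
    (isCompactOperator_of_summable_norm_sq e u' hu'.summable)
  exact ⟨w, b, by simpa [u'] using hb, by simpa [u'] using hasSum_norm_sq_of_hilbertBasis e b hu'⟩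

theorem exists_schmidt_decomposition_of_orthogonal_images (b : HilbertBasis κ 𝕜 H₂)
    (u : H₂ →L[𝕜] H₁) (hb : Pairwise fun i j => ⟪u (b i), u (b j)⟫_𝕜 = 0) {a : ℝ}
    (hu : HasSum (fun j => ‖u (b j)‖ ^ 2) a) :
    ∃ (σ : ℕ → ℝ) (ψ : ℕ → H₁) (φ : ℕ → H₂),
      Antitone σ ∧ (∀ i, 0 ≤ σ i) ∧
      Orthonormal 𝕜 (fun i : {i : ℕ // σ i ≠ 0} => ψ i) ∧
      Orthonormal 𝕜 (fun i : {i : ℕ // σ i ≠ 0} => φ i) ∧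
      (∀ g : H₂, HasSum (fun i => ((σ i : 𝕜) * ⟪φ i, g⟫_𝕜) • ψ i) (u g)) ∧
      HasSum (fun i => σ i ^ 2) a := by
  have hlim : Tendsto (fun j => ‖u (b j)‖) cofinite (𝓝 0) := by
    simpa using hu.summable.tendsto_cofinite_zero.sqrt
  obtain ⟨σ, τ, hanti, hσ₀, hτ⟩ := exists_antitone_equiv_support (fun j => norm_nonneg _) hlim
  have hτ_inj : Injective fun n => (τ n : κ) := Subtype.val_injective.comp τ.injective
  let φ : ℕ → H₂ := extend Subtype.val (fun n : support σ => b (τ n)) 0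
  have hφ (n : support σ) : φ n = b (τ n) := Subtype.val_injective.extend_apply _ _ n
  let ψ : ℕ → H₁ := fun n => (σ n : 𝕜)⁻¹ • u (φ n)
  have hψ (n : support σ) : ψ n = ((‖u (b (τ n))‖⁻¹ : ℝ) : 𝕜) • u (b (τ n)) := by
    simp [ψ, hφ, ← hτ n]
  have hψ_orth : Orthonormal 𝕜 fun n : support σ => ψ n := by
    simp only [hψ]
    exact orthonormal_normalize (fun i j hij => hb (hτ_inj.ne hij)) fun n =>
      norm_ne_zero_iff.mp (τ n).2
  have hφ_orth : Orthonormal 𝕜 fun n : support σ => φ n := by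
    simp only [hφ]
    exact b.orthonormal.comp _ hτ_inj
  refine ⟨σ, ψ, φ, hanti, hσ₀, hψ_orth, hφ_orth, fun g => ?_, ?_⟩
  · refine (hasSum_iff_of_equiv_of_support_subset τ ?_ ?_ fun n => ?_).mpr
      (hasSum_inner_smul_map b u g)
    · exact support_subset_iff'.mpr fun n hn => by simp [notMem_support.mp hn]
    · exact support_subset_iff'.mpr fun j hj => by simp [norm_eq_zero.mp (notMem_support.mp hj)]
    · have hσn : (σ n : 𝕜) ≠ 0 := RCLike.ofReal_ne_zero.mpr n.2
      simp only [ψ, hφ, smul_smul]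
      congr 1
      field_simp
  · exact (hasSum_iff_of_equiv_of_support_subset τ (by simp) (by simp) fun n => by
      rw [hτ n]).mpr hu

theorem stmt9_general (e : HilbertBasis ι 𝕜 H₂) (u : H₂ →L[𝕜] H₁)
    (hHS : Summable fun i => ‖u (e i)‖ ^ 2) :
    ∃ (σ : ℕ → ℝ) (ψ : ℕ → H₁) (φ : ℕ → H₂),
      Antitone σ ∧ (∀ i, 0 ≤ σ i) ∧ Summable (fun i => σ i ^ 2) ∧
      Orthonormal 𝕜 (fun i : {i : ℕ // σ i ≠ 0} => ψ i) ∧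
      Orthonormal 𝕜 (fun i : {i : ℕ // σ i ≠ 0} => φ i) ∧
      (∀ g : H₂, HasSum (fun i => ((σ i : 𝕜) * ⟪φ i, g⟫_𝕜) • ψ i) (u g)) ∧
      (∑' i, ‖u (e i)‖ ^ 2) = ∑' i, σ i ^ 2 := by
  have : CompleteSpace H₂ := e.repr.toIsometryEquiv.completeSpace
  obtain ⟨w, b, hb, hb_norm⟩ := exists_hilbertBasis_orthogonal_images e u hHS.hasSum
  obtain ⟨σ, ψ, φ, hanti, hσ₀, hψ, hφ, hexp, hσ⟩ :=
    exists_schmidt_decomposition_of_orthogonal_images b u hb hb_norm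
  exact ⟨σ, ψ, φ, hanti, hσ₀, hσ.summable, hψ, hφ, hexp, hσ.tsum_eq.symm⟩

end HilbertSchmidt

/-- Schmidt decomposition / singular value expansion: identifying the
Hilbert tensor product `H₁ ⊗ H₂` with the Hilbert–Schmidt operators `H₂ → H₁`
(with `ψ ⊗ φ` corresponding to `g ↦ ⟪φ, g⟫ • ψ`), every `u ∈ H₁ ⊗ H₂` admits an
expansion `u = Σ σ_i ψ_i ⊗ φ_i` with `(σ_i)` nonincreasing, nonnegative and
square-summable, `(ψ_i)`, `(φ_i)` orthonormal (where `σ_i ≠ 0`), convergence in norm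
(`HasSum` pointwise for the associated operator) and `‖u‖² = Σ σ_i²` (Hilbert–Schmidt
norm). -/
theorem stmt9 {H₁ H₂ : Type*}
    [NormedAddCommGroup H₁] [InnerProductSpace ℝ H₁] [CompleteSpace H₁]
    [TopologicalSpace.SeparableSpace H₁]
    [NormedAddCommGroup H₂] [InnerProductSpace ℝ H₂] [CompleteSpace H₂]
    (e : HilbertBasis ℕ ℝ H₂)
    (u : H₂ →L[ℝ] H₁) (hHS : Summable fun i => ‖u (e i)‖ ^ 2) :
    ∃ (σ : ℕ → ℝ) (ψ : ℕ → H₁) (φ : ℕ → H₂),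
      Antitone σ ∧ (∀ i, 0 ≤ σ i) ∧ Summable (fun i => σ i ^ 2) ∧
      Orthonormal ℝ (fun i : {i : ℕ // σ i ≠ 0} => ψ i) ∧
      Orthonormal ℝ (fun i : {i : ℕ // σ i ≠ 0} => φ i) ∧
      (∀ g : H₂, HasSum (fun i => (σ i * ⟪φ i, g⟫_ℝ) • ψ i) (u g)) ∧
      (∑' i, ‖u (e i)‖ ^ 2) = ∑' i, σ i ^ 2 :=
  stmt9_general e u hHS
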